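/- Let g : ℝ → ℝ be the trapezoid function, define Ψ(u) := 2·∫₁⁴ log₂(u+α) g(α) dα for u ≥ 0, let w_n ≥ 0 with Σ_{n=1}^∞ w_n = 1, let u_n ≥ 0, and define f(α) = Σ_{n=1}^∞ w_n · g(|α| − u_n). If Σ_{n=1}^∞ w_n · Ψ(u_n) < ∞, then the function α ↦ log₂(α²)·f(α) is integrable on ℝ and ∫_ℝ log₂(α²) f(α) dα = 2·Σ_{n=1}^∞ w_n · Ψ(u_n). -/

import Mathlib

open Filter MeasureTheory intervalIntegral

/-- The trapezoid function `g`: it vanishes outside `[1,4]`, rises linearly from `0`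
to `1/4` on `[1,2]`, equals `1/4` on `[2,3]`, and falls linearly back to `0` on `[3,4]`. -/
noncomputable def trap (α : ℝ) : ℝ :=
  if α < 1 then 0
  else if α ≤ 2 then (α - 1) / 4
  else if α < 3 then 1 / 4
  else if α ≤ 4 then (4 - α) / 4
  else 0

/-- `Ψ(u) = 2 ∫₁⁴ log₂(u+α) g(α) dα`. -/
noncomputable def Psi (u : ℝ) : ℝ :=
  2 * ∫ α in (1 : ℝ)..4, Real.logb 2 (u + α) * trap α

lemma trap_eq (x : ℝ) : trap x = max 0 (min (1/4) (min ((x-1)/4) ((4-x)/4))) := by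
  unfold trap
  simp only [max_def, min_def]
  split_ifs <;> linarith

lemma trap_cont : Continuous trap := by
  have : trap = fun x => max 0 (min (1/4) (min ((x-1)/4) ((4-x)/4))) := funext trap_eq
  rw [this]; fun_prop

lemma trap_nonneg (x : ℝ) : 0 ≤ trap x := by rw [trap_eq]; exact le_max_left _ _

lemma trap_zero_left {x : ℝ} (h : x ≤ 1) : trap x = 0 := by
  unfold trap; split_ifs <;> linarith

lemma trap_zero_right {x : ℝ} (h : 4 ≤ x) : trap x = 0 := by
  unfold trap; split_ifs <;> linarith

lemma term_eq {u : ℝ} (hu : 0 ≤ u) (x : ℝ) :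
    Real.logb 2 (x ^ 2) * trap (|x| - u) =
      Real.logb 2 ((max |x| 1) ^ 2) * trap (|x| - u) := by
  by_cases h : |x| ≤ 1
  · rw [trap_zero_left (by linarith)]; simp
  · rw [max_eq_left (by linarith), sq_abs]

lemma term_nonneg {u : ℝ} (hu : 0 ≤ u) (x : ℝ) :
    0 ≤ Real.logb 2 (x ^ 2) * trap (|x| - u) := by
  rw [term_eq hu]
  refine mul_nonneg (Real.logb_nonneg (by norm_num) ?_) (trap_nonneg _)
  exact one_le_pow₀ (le_max_right _ _)

lemma term_integrable {u : ℝ} (hu : 0 ≤ u) :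
    Integrable (fun x : ℝ => Real.logb 2 (x ^ 2) * trap (|x| - u)) := by
  simp_rw [term_eq hu]
  refine Continuous.integrable_of_hasCompactSupport ?_ ?_
  · refine Continuous.mul ?_ (trap_cont.comp (by fun_prop))
    unfold Real.logb
    refine Continuous.div_const (Continuous.log (by fun_prop) ?_) _
    intro x
    have : (1:ℝ) ≤ max |x| 1 := le_max_right _ _
    positivity
  · refine HasCompactSupport.intro (isCompact_Icc (a := -(u + 4)) (b := u + 4)) ?_
    intro x hx
    have : ¬ |x| ≤ u + 4 := fun h => hx (abs_le.mp h)
    rw [trap_zero_right (by linarith), mul_zero]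

lemma term_integral {u : ℝ} (hu : 0 ≤ u) :
    ∫ x : ℝ, Real.logb 2 (x ^ 2) * trap (|x| - u) = 2 * Psi u := by
  have h1 := integral_comp_abs (f := fun x : ℝ => Real.logb 2 (x ^ 2) * trap (x - u))
  simp only [sq_abs] at h1
  rw [h1, setIntegral_eq_integral_of_forall_compl_eq_zero
    (fun x hx => by
      rw [trap_zero_left (by simp at hx; linarith), mul_zero]),
    ← integral_add_right_eq_self _ u, Psi, integral_of_le (by norm_num),
    setIntegral_eq_integral_of_forall_compl_eq_zero
    (fun x hx => by
      by_cases h : x ≤ 1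
      · rw [trap_zero_left h, mul_zero]
      · rw [trap_zero_right, mul_zero]
        by_contra h4
        exact hx ⟨by linarith, by linarith⟩)]
  congr 1
  rw [← MeasureTheory.integral_const_mul (2 : ℝ)]
  congr 1
  ext x
  rw [Real.logb_pow, add_sub_cancel_right, add_comm x u]
  push_cast; ring

lemma trap_le (x : ℝ) : trap x ≤ 1 := by
  rw [trap_eq]
  exact max_le (by norm_num) ((min_le_left _ _).trans (by norm_num))

theorem stmt10 (w u : ℕ → ℝ) (hw : ∀ n : ℕ, 1 ≤ n → 0 ≤ w n)
    (hsum : HasSum (fun n : ℕ => w (n + 1)) 1)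
    (hu : ∀ n : ℕ, 1 ≤ n → 0 ≤ u n)
    (f : ℝ → ℝ) (hf : ∀ α, f α = ∑' n : ℕ, w (n + 1) * trap (|α| - u (n + 1)))
    (hPsiSum : Summable (fun n : ℕ => w (n + 1) * Psi (u (n + 1)))) :
    Integrable (fun α => Real.logb 2 (α ^ 2) * f α) ∧
    (∫ α, Real.logb 2 (α ^ 2) * f α) = 2 * ∑' n : ℕ, w (n + 1) * Psi (u (n + 1)) := by
  have hw' : ∀ n, 0 ≤ w (n + 1) := fun n => hw _ (by omega)
  have hu' : ∀ n, 0 ≤ u (n + 1) := fun n => hu _ (by omega)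
  have hb : ∀ n (α : ℝ), ‖w (n + 1) * trap (|α| - u (n + 1))‖ ≤ w (n + 1) := by
    intro n α
    rw [Real.norm_of_nonneg (mul_nonneg (hw' n) (trap_nonneg _))]
    exact mul_le_of_le_one_right (hw' n) (trap_le _)
  have hfc : Continuous f := by
    rw [funext hf]
    refine continuous_tsum (fun n => ?_) hsum.summable hb
    exact continuous_const.mul (trap_cont.comp (by fun_prop))
  have hs : ∀ α : ℝ, Summable (fun n => w (n + 1) * trap (|α| - u (n + 1))) :=
    fun α => Summable.of_norm_bounded hsum.summable (fun n => hb n α)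
  set F : ℕ → ℝ → ℝ := fun n α =>
    w (n + 1) * (Real.logb 2 (α ^ 2) * trap (|α| - u (n + 1))) with hF
  have hF0 : ∀ n α, 0 ≤ F n α := fun n α => mul_nonneg (hw' n) (term_nonneg (hu' n) α)
  have hFi : ∀ n, Integrable (F n) := fun n => (term_integrable (hu' n)).const_mul _
  have hFint : ∀ n, ∫ α, F n α = 2 * (w (n + 1) * Psi (u (n + 1))) := by
    intro n
    simp only [hF]
    rw [MeasureTheory.integral_const_mul, term_integral (hu' n)]
    ring
  have hFe : ∀ n α, F n α = Real.logb 2 (α ^ 2) * (w (n + 1) * trap (|α| - u (n + 1))) := by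
    intro n α
    simp only [hF]; ring
  have hFs : ∀ α, Summable (fun n => F n α) := by
    intro α
    simp_rw [hFe]
    exact (hs α).mul_left _
  have hft : ∀ α, Real.logb 2 (α ^ 2) * f α = ∑' n, F n α := by
    intro α
    simp_rw [hFe]
    rw [tsum_mul_left, hf]
  have hFsum : Summable (fun n => ∫ α, F n α) := by
    simp_rw [hFint]
    exact hPsiSum.mul_left 2
  constructor
  · refine ⟨?_, ?_⟩
    · refine (Measurable.mul ?_ hfc.measurable).aestronglyMeasurable
      unfold Real.logb
      fun_prop
    · rw [hasFiniteIntegral_iff_ofReal (Eventually.of_forall fun α => by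
        simp only [Pi.zero_apply]
        rw [hft]
        exact tsum_nonneg fun n => hF0 n α)]
      simp_rw [hft]
      simp_rw [fun α => ENNReal.ofReal_tsum_of_nonneg (fun n => hF0 n α) (hFs α)]
      rw [lintegral_tsum fun n => (hFi n).1.aemeasurable.ennreal_ofReal]
      simp_rw [fun n => (ofReal_integral_eq_lintegral_ofReal (hFi n)
        (Eventually.of_forall (hF0 n))).symm]
      rw [← ENNReal.ofReal_tsum_of_nonneg (fun n => integral_nonneg (hF0 n)) hFsum]
      exact ENNReal.ofReal_lt_top
  · simp_rw [hft]
    rw [← integral_tsum_of_summable_integral_norm hFi]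
    · simp_rw [hFint]
      rw [tsum_mul_left]
    · simpa only [Real.norm_of_nonneg (hF0 _ _)] using hFsum
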